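/- Let G = (V,E) be a finite graph, k ≥ 1 an integer, and v ∈ V a vertex whose neighbourhood N(v) induces a clique in G and satisfies |N(v)| ≤ k − 2. Fix positive rates (p_u)_{u∈V}. Let 𝓛_V be the Glauber dynamics for proper k-vertex-colourings of G with these rates, and let 𝓛_{V∖{v}} be the Glauber dynamics for proper k-vertex-colourings of the graph G − v (G with v and its incident edges deleted) with the rates (p_u)_{u≠v}. If G − v has at least two proper k-vertex-colourings, then Gap(𝓛_V) ≤ Gap(𝓛_{V∖{v}}); equivalently, τ(𝓛_{V∖{v}}) ≤ τ(𝓛_V). -/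

import Mathlib

/-!
Restriction of colourings from `G` to `G - v` has fibres of constant size `k - deg v`, because a
colouring uses exactly `deg v` colours on the clique `N(v)`; hence it maps the uniform distribution
to the uniform distribution, and lifting a function along it preserves the variance. From a given
colouring of `G`, a move of `G - v` can be performed in at most one way, at the same rate, and moves
at `v` do not change a lifted function, so lifting does not increase the Dirichlet form. Comparing
Rayleigh quotients gives the inequality of the gaps.

For the relaxation times, the convention `1 / 0 = 0` makes it necessary to show that a positive gap
for `G - v` forces a positive gap for `G`. Positivity of the gap is ergodicity, and ergodicity
lifts: colourings in one fibre differ only at `v`, and every move on `G - v` lifts to `G` because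
`deg v + 1 < k` leaves a colour for `v` that avoids both `N(v)` and the new colour.
-/

open Finset
open scoped Classical

section Markov

variable {Ω : Type*} [Fintype Ω]

/-- A generator matrix: nonnegative off-diagonal entries, zero row sums. -/
def IsGenerator (L : Ω → Ω → ℝ) : Prop :=
  (∀ x y : Ω, x ≠ y → 0 ≤ L x y) ∧ (∀ x : Ω, ∑ y : Ω, L x y = 0)

/-- A transition of a generator matrix. -/
def IsTransition (L : Ω → Ω → ℝ) (x y : Ω) : Prop := x ≠ y ∧ 0 < L x y

/-- Ergodicity: the directed graph of transitions is strongly connected. -/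
def IsErgodicGen (L : Ω → Ω → ℝ) : Prop :=
  ∀ x y : Ω, Relation.ReflTransGen (IsTransition L) x y

/-- Reversibility with respect to a distribution π. -/
def IsReversible (L : Ω → Ω → ℝ) (π : Ω → ℝ) : Prop :=
  ∀ x y : Ω, π x * L x y = π y * L y x

/-- The variance form. -/
noncomputable def VarForm (π : Ω → ℝ) (f : Ω → ℝ) : ℝ :=
  (1 / 2) * ∑ a : Ω, ∑ b : Ω, π a * π b * (f a - f b) ^ 2

/-- The Dirichlet form. -/
noncomputable def DirForm (π : Ω → ℝ) (L : Ω → Ω → ℝ) (f : Ω → ℝ) : ℝ :=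
  (1 / 2) * ∑ a : Ω, ∑ b : Ω, π a * L a b * (f a - f b) ^ 2

/-- The spectral gap: infimum (= minimum) of the Rayleigh quotient over nonconstant functions. -/
noncomputable def specGap (π : Ω → ℝ) (L : Ω → Ω → ℝ) : ℝ :=
  sInf {r : ℝ | ∃ f : Ω → ℝ, (∃ a b : Ω, f a ≠ f b) ∧ r = DirForm π L f / VarForm π f}

/-- The relaxation time, with the convention that it equals 1 on a one-point space. -/
noncomputable def relaxTime (π : Ω → ℝ) (L : Ω → Ω → ℝ) : ℝ :=
  if ∃ a b : Ω, a ≠ b then 1 / specGap π L else 1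

/-- The uniform distribution on a finite type. -/
noncomputable def unif (Ω : Type*) [Fintype Ω] : Ω → ℝ := fun _ => 1 / (Fintype.card Ω : ℝ)

end Markov

section Glauber

variable {I : Type*} [Fintype I] {k : ℕ} {S : Type*} [Fintype S] [DecidableEq S]

/-- Off-diagonal entry of the Glauber dynamics: if the two states differ at exactly one site,
the rate of that site; otherwise `0`. -/
noncomputable def glauberOff (p : I → ℝ) (val : S → I → Fin k) (a b : S) : ℝ :=
  if (Finset.univ.filter fun w => val a w ≠ val b w).card = 1 then
    ∑ w ∈ Finset.univ.filter fun w => val a w ≠ val b w, p w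
  else 0

/-- The Glauber dynamics generator with site rates `p`, on a state space `S` of configurations
(described by `val : S → I → Fin k`): off-diagonal entries are the rate of the unique differing
site, diagonal entries make row sums vanish. -/
noncomputable def glauber (p : I → ℝ) (val : S → I → Fin k) : S → S → ℝ :=
  fun σ η =>
    if σ = η then -∑ η' ∈ Finset.univ.filter fun b => b ≠ σ, glauberOff p val σ η'
    else glauberOff p val σ η

end Glauber

/-- A proper `k`-vertex-colouring of a graph. -/
def ProperCol {V : Type*} (G : SimpleGraph V) {k : ℕ} (σ : V → Fin k) : Prop :=
  ∀ a b : V, G.Adj a b → σ a ≠ σ b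

/-! ### Rayleigh quotients -/

section Rayleigh

variable {Ω : Type*} {π : Ω → ℝ} {L : Ω → Ω → ℝ}

lemma dirForm_summand_nonneg (hπ : ∀ a, 0 ≤ π a) (hL : ∀ a b, a ≠ b → 0 ≤ L a b) (f : Ω → ℝ)
    (a b : Ω) : 0 ≤ π a * L a b * (f a - f b) ^ 2 := by
  obtain rfl | hab := eq_or_ne a b
  · simp
  · exact mul_nonneg (mul_nonneg (hπ a) (hL a b hab)) (sq_nonneg _)

variable [Fintype Ω]

lemma dirForm_nonneg (hπ : ∀ a, 0 ≤ π a) (hL : ∀ a b, a ≠ b → 0 ≤ L a b) (f : Ω → ℝ) :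
    0 ≤ DirForm π L f :=
  mul_nonneg (by norm_num) <| sum_nonneg fun a _ => sum_nonneg fun b _ =>
    dirForm_summand_nonneg hπ hL f a b

lemma dirForm_summand_le (hπ : ∀ a, 0 ≤ π a) (hL : ∀ a b, a ≠ b → 0 ≤ L a b) (f : Ω → ℝ)
    (a b : Ω) : π a * L a b * (f a - f b) ^ 2 ≤ 2 * DirForm π L f := by
  have hnonneg := dirForm_summand_nonneg hπ hL f
  calc π a * L a b * (f a - f b) ^ 2
      ≤ ∑ y, π a * L a y * (f a - f y) ^ 2 :=
        single_le_sum (fun y _ => hnonneg a y) (mem_univ b)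
    _ ≤ ∑ x, ∑ y, π x * L x y * (f x - f y) ^ 2 :=
        single_le_sum (f := fun x => ∑ y, π x * L x y * (f x - f y) ^ 2)
          (fun x _ => sum_nonneg fun y _ => hnonneg x y) (mem_univ a)
    _ = 2 * DirForm π L f := by unfold DirForm; ring

lemma varForm_eq_dirForm (π f : Ω → ℝ) : VarForm π f = DirForm π (fun _ b => π b) f := rfl

lemma varForm_nonneg (hπ : ∀ a, 0 ≤ π a) (f : Ω → ℝ) : 0 ≤ VarForm π f :=
  varForm_eq_dirForm π f ▸ dirForm_nonneg hπ (fun _ b _ => hπ b) f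

lemma varForm_pos (hπ : ∀ a, 0 < π a) {f : Ω → ℝ} (hf : ∃ a b, f a ≠ f b) : 0 < VarForm π f := by
  obtain ⟨a, b, hab⟩ := hf
  have hsummand : 0 < π a * π b * (f a - f b) ^ 2 :=
    mul_pos (mul_pos (hπ a) (hπ b)) (sq_pos_of_ne_zero (sub_ne_zero.mpr hab))
  have hle := dirForm_summand_le (fun x => (hπ x).le) (fun _ y _ => (hπ y).le) f a b
  rw [← varForm_eq_dirForm] at hle
  linarith

lemma specGap_nonneg (hπ : ∀ a, 0 ≤ π a) (hL : ∀ a b, a ≠ b → 0 ≤ L a b) : 0 ≤ specGap π L := by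
  apply Real.sInf_nonneg
  rintro _ ⟨f, -, rfl⟩
  exact div_nonneg (dirForm_nonneg hπ hL f) (varForm_nonneg hπ f)

lemma specGap_le_div (hπ : ∀ a, 0 ≤ π a) (hL : ∀ a b, a ≠ b → 0 ≤ L a b) {f : Ω → ℝ}
    (hf : ∃ a b, f a ≠ f b) : specGap π L ≤ DirForm π L f / VarForm π f := by
  refine csInf_le ⟨0, ?_⟩ ⟨f, hf, rfl⟩
  rintro _ ⟨g, -, rfl⟩
  exact div_nonneg (dirForm_nonneg hπ hL g) (varForm_nonneg hπ g)

lemma le_specGap [Nontrivial Ω] {c : ℝ}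
    (h : ∀ f : Ω → ℝ, (∃ a b, f a ≠ f b) → c ≤ DirForm π L f / VarForm π f) :
    c ≤ specGap π L := by
  obtain ⟨a, b, hab⟩ := exists_pair_ne Ω
  refine le_csInf ⟨_, Pi.single a 1, ⟨a, b, by simp [hab.symm]⟩, rfl⟩ ?_
  rintro _ ⟨f, hf, rfl⟩
  exact h f hf

lemma relaxTime_eq_one_div [Nontrivial Ω] (π : Ω → ℝ) (L : Ω → Ω → ℝ) :
    relaxTime π L = 1 / specGap π L :=
  if_pos (exists_pair_ne Ω)

lemma relaxTime_le_of_specGap_le {Ω' : Type*} [Fintype Ω'] [Nontrivial Ω] [Nontrivial Ω']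
    {π' : Ω' → ℝ} {L' : Ω' → Ω' → ℝ} (hnonneg : 0 ≤ specGap π L)
    (hle : specGap π L ≤ specGap π' L') (hpos : 0 < specGap π' L' → 0 < specGap π L) :
    relaxTime π' L' ≤ relaxTime π L := by
  rw [relaxTime_eq_one_div, relaxTime_eq_one_div]
  obtain hzero | hgap := hnonneg.eq_or_lt
  · have hzero' : specGap π' L' = 0 :=
      (not_lt.mp fun h => (hpos h).ne hzero).antisymm (hzero.trans_le hle)
    rw [← hzero, hzero']
  · exact one_div_le_one_div_of_le hgap hle

end Rayleigh

/-! ### Comparison along a projection -/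

section Projection

variable {Ω Ω' : Type*} [Fintype Ω] [DecidableEq Ω'] {φ : Ω → Ω'}
  {π : Ω → ℝ} {π' : Ω' → ℝ} {L : Ω → Ω → ℝ} {L' : Ω' → Ω' → ℝ}

/-- The weight function `π'` is the image of the weight function `π` under `φ`: the weight of a
point is the total weight of its fibre. -/
def IsPushforward (φ : Ω → Ω') (π : Ω → ℝ) (π' : Ω' → ℝ) : Prop :=
  ∀ a' : Ω', ∑ a with φ a = a', π a = π' a'

lemma IsPushforward.surjective (h : IsPushforward φ π π') (hπ' : ∀ a', 0 < π' a') :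
    Function.Surjective φ := by
  intro a'
  have hne : ∑ a with φ a = a', π a ≠ 0 := (h a').trans_ne (hπ' a').ne'
  obtain ⟨a, ha, -⟩ := exists_ne_zero_of_sum_ne_zero hne
  exact ⟨a, (mem_filter.mp ha).2⟩

variable [Fintype Ω']

lemma IsPushforward.sum_mul_comp (h : IsPushforward φ π π') (g : Ω' → ℝ) :
    ∑ a, π a * g (φ a) = ∑ a', π' a' * g a' := by
  rw [← sum_fiberwise univ φ]
  refine sum_congr rfl fun a' _ => ?_
  rw [← h a', sum_mul]
  exact sum_congr rfl fun a ha => by rw [(mem_filter.mp ha).2]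

lemma IsPushforward.varForm_comp (h : IsPushforward φ π π') (g : Ω' → ℝ) :
    VarForm π (fun a => g (φ a)) = VarForm π' g := by
  have hrow (a : Ω) : ∑ b, π b * (g (φ a) - g (φ b)) ^ 2 =
      ∑ b', π' b' * (g (φ a) - g b') ^ 2 :=
    h.sum_mul_comp fun b' => (g (φ a) - g b') ^ 2
  simp only [VarForm, mul_assoc, ← mul_sum, hrow]
  rw [h.sum_mul_comp fun a' => ∑ b', π' b' * (g a' - g b') ^ 2]

lemma IsPushforward.dirForm_comp_le (h : IsPushforward φ π π') (hπ : ∀ a, 0 ≤ π a)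
    (hrate : ∀ a b', φ a ≠ b' → ∑ b with φ b = b', L a b ≤ L' (φ a) b') (g : Ω' → ℝ) :
    DirForm π L (fun a => g (φ a)) ≤ DirForm π' L' g := by
  have hrow (a : Ω) : ∑ b, L a b * (g (φ a) - g (φ b)) ^ 2 ≤
      ∑ b', L' (φ a) b' * (g (φ a) - g b') ^ 2 := by
    rw [← sum_fiberwise univ φ]
    refine sum_le_sum fun b' _ => ?_
    rw [sum_congr rfl fun b hb => by rw [(mem_filter.mp hb).2], ← sum_mul]
    obtain rfl | hne := eq_or_ne (φ a) b'
    · simp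
    · exact mul_le_mul_of_nonneg_right (hrate a b' hne) (sq_nonneg _)
  simp only [DirForm, mul_assoc, ← mul_sum]
  rw [← h.sum_mul_comp fun a' => ∑ b', L' a' b' * (g a' - g b') ^ 2]
  gcongr with a
  · exact hπ a
  · exact hrow a

theorem IsPushforward.specGap_le [Nontrivial Ω'] (h : IsPushforward φ π π')
    (hπ : ∀ a, 0 ≤ π a) (hπ' : ∀ a', 0 < π' a') (hL : ∀ a b, a ≠ b → 0 ≤ L a b)
    (hrate : ∀ a b', φ a ≠ b' → ∑ b with φ b = b', L a b ≤ L' (φ a) b') :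
    specGap π L ≤ specGap π' L' := by
  refine le_specGap fun g ⟨a', b', hg⟩ => ?_
  obtain ⟨a, rfl⟩ := h.surjective hπ' a'
  obtain ⟨b, rfl⟩ := h.surjective hπ' b'
  calc specGap π L
      ≤ DirForm π L (fun a => g (φ a)) / VarForm π (fun a => g (φ a)) :=
        specGap_le_div hπ hL ⟨a, b, hg⟩
    _ = DirForm π L (fun a => g (φ a)) / VarForm π' g := by rw [h.varForm_comp]
    _ ≤ DirForm π' L' g / VarForm π' g :=
        div_le_div_of_nonneg_right (h.dirForm_comp_le hπ hrate g)
          (varForm_nonneg (fun a' => (hπ' a').le) g)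

lemma unif_pos (a : Ω) : 0 < unif Ω a := by
  have : 0 < Fintype.card Ω := Fintype.card_pos_iff.mpr ⟨a⟩
  unfold unif
  positivity

lemma isPushforward_unif {m : ℕ} (hm : m ≠ 0) (hφ : ∀ a', #{a | φ a = a'} = m) :
    IsPushforward φ (unif Ω) (unif Ω') := by
  intro a'
  have hcard : Fintype.card Ω = Fintype.card Ω' * m := by
    simpa [hφ] using card_eq_sum_card_fiberwise (f := φ) (s := univ) (t := univ) (by simp)
  have : Nonempty Ω' := ⟨a'⟩
  simp only [unif, sum_const, hφ, nsmul_eq_mul, hcard, Nat.cast_mul]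
  field_simp

end Projection

/-! ### Ergodicity and positivity of the gap -/

section Ergodicity

open Relation

variable {Ω Ω' : Type*} {π : Ω → ℝ} {L : Ω → Ω → ℝ} {L' : Ω' → Ω' → ℝ}

lemma isErgodicGen_of_lift {φ : Ω → Ω'}
    (hfiber : ∀ a b, φ a = φ b → ReflTransGen (IsTransition L) a b)
    (hlift : ∀ a' b', IsTransition L' a' b' → ∃ a b, φ a = a' ∧ φ b = b' ∧ IsTransition L a b)
    (herg : IsErgodicGen L') : IsErgodicGen L := by
  intro a b
  suffices ∀ b', ReflTransGen (IsTransition L') (φ a) b' →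
      ∀ b, φ b = b' → ReflTransGen (IsTransition L) a b from this _ (herg _ _) b rfl
  intro b' hpath
  induction hpath with
  | refl => exact fun b hb => hfiber a b hb.symm
  | tail _ hstep ih =>
    intro b hb
    obtain ⟨x, y, hx, hy, hxy⟩ := hlift _ _ hstep
    exact ((ih x hx).tail hxy).trans (hfiber y b (hy.trans hb.symm))

variable [Fintype Ω]

lemma exists_sq_sub_le_mul_dirForm (hπ : ∀ a, 0 < π a) (hL : ∀ a b, a ≠ b → 0 ≤ L a b) {a b : Ω}
    (hpath : ReflTransGen (IsTransition L) a b) :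
    ∃ C, 0 ≤ C ∧ ∀ f : Ω → ℝ, (f a - f b) ^ 2 ≤ C * DirForm π L f := by
  induction hpath with
  | refl => exact ⟨0, le_rfl, fun f => by simp⟩
  | @tail x y _ hstep ih =>
    obtain ⟨C, hC, hCf⟩ := ih
    have hpos : 0 < π x * L x y := mul_pos (hπ x) hstep.2
    refine ⟨2 * C + 2 * (2 / (π x * L x y)), by positivity, fun f => ?_⟩
    have hlast : (f x - f y) ^ 2 ≤ 2 / (π x * L x y) * DirForm π L f := by
      rw [div_mul_eq_mul_div, le_div_iff₀' hpos]
      exact dirForm_summand_le (fun z => (hπ z).le) hL f x y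
    calc (f a - f y) ^ 2 = (f a - f x + (f x - f y)) ^ 2 := by ring
      _ ≤ 2 * ((f a - f x) ^ 2 + (f x - f y) ^ 2) := add_sq_le
      _ ≤ 2 * (C * DirForm π L f + 2 / (π x * L x y) * DirForm π L f) := by
        gcongr
        exact hCf f
      _ = _ := by ring

lemma exists_varForm_le_mul_dirForm (hπ : ∀ a, 0 < π a) (hL : ∀ a b, a ≠ b → 0 ≤ L a b)
    (herg : IsErgodicGen L) : ∃ C > 0, ∀ f : Ω → ℝ, VarForm π f ≤ C * DirForm π L f := by
  choose C hC hCf using fun a b => exists_sq_sub_le_mul_dirForm hπ hL (herg a b)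
  have hweight (a b : Ω) : 0 ≤ π a * π b := (mul_pos (hπ a) (hπ b)).le
  have hsum : 0 ≤ ∑ a, ∑ b, π a * π b * C a b :=
    sum_nonneg fun a _ => sum_nonneg fun b _ => mul_nonneg (hweight a b) (hC a b)
  refine ⟨1 / 2 * ∑ a, ∑ b, π a * π b * C a b + 1, by positivity, fun f => ?_⟩
  calc VarForm π f
      ≤ 1 / 2 * ∑ a, ∑ b, π a * π b * (C a b * DirForm π L f) := by
        unfold VarForm
        gcongr with a _ b
        · exact hweight a b
        · exact hCf a b f
    _ = 1 / 2 * (∑ a, ∑ b, π a * π b * C a b) * DirForm π L f := by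
        simp only [mul_assoc, sum_mul]
    _ ≤ _ := by
        gcongr
        · exact dirForm_nonneg (fun a => (hπ a).le) hL f
        · linarith

theorem specGap_pos_of_isErgodicGen [Nontrivial Ω] (hπ : ∀ a, 0 < π a)
    (hL : ∀ a b, a ≠ b → 0 ≤ L a b) (herg : IsErgodicGen L) : 0 < specGap π L := by
  obtain ⟨C, hC, hCf⟩ := exists_varForm_le_mul_dirForm hπ hL herg
  refine (one_div_pos.mpr hC).trans_le (le_specGap fun f hf => ?_)
  rw [div_le_div_iff₀ hC (varForm_pos hπ hf), one_mul, mul_comm]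
  exact hCf f

theorem isErgodicGen_of_specGap_pos (hπ : ∀ a, 0 ≤ π a) (hL : ∀ a b, a ≠ b → 0 ≤ L a b)
    (hrev : IsReversible L π) (hgap : 0 < specGap π L) : IsErgodicGen L := by
  intro a b
  by_contra hab
  let f : Ω → ℝ := {x | ReflTransGen (IsTransition L) a x}.indicator 1
  have hexit {x y : Ω} (hx : ReflTransGen (IsTransition L) a x)
      (hy : ¬ ReflTransGen (IsTransition L) a y) : L x y = 0 := by
    have hxy : x ≠ y := fun h => hy (h ▸ hx)
    exact (hL x y hxy).antisymm' (not_lt.mp fun hpos => hy (hx.tail ⟨hxy, hpos⟩))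
  have hsummand (x y : Ω) : π x * L x y * (f x - f y) ^ 2 = 0 := by
    by_cases hx : ReflTransGen (IsTransition L) a x <;>
      by_cases hy : ReflTransGen (IsTransition L) a y
    · simp [f, hx, hy]
    · simp [hexit hx hy]
    · simp [hrev x y, hexit hy hx]
    · simp [f, hx, hy]
  have hnonconst : f a ≠ f b := by simp [f, hab, ReflTransGen.refl]
  have hle := specGap_le_div hπ hL ⟨a, b, hnonconst⟩
  simp only [DirForm, hsummand, sum_const_zero, mul_zero, zero_div] at hle
  exact hgap.not_ge hle

end Ergodicity

/-! ### Glauber dynamics -/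

section GlauberRates

variable {I : Type*} [Fintype I] {k : ℕ} {S : Type*} {p : I → ℝ} {val : S → I → Fin k} {a b : S}

lemma glauberOff_comm (p : I → ℝ) (val : S → I → Fin k) (a b : S) :
    glauberOff p val a b = glauberOff p val b a := by
  simp only [glauberOff, ne_comm (a := val a _)]

lemma glauberOff_nonneg (hp : ∀ w, 0 ≤ p w) (val : S → I → Fin k) (a b : S) :
    0 ≤ glauberOff p val a b := by
  unfold glauberOff
  split_ifs
  · exact sum_nonneg fun w _ => hp w
  · exact le_rfl

lemma glauberOff_eq_zero (h : ¬ ∃! w, val a w ≠ val b w) : glauberOff p val a b = 0 :=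
  if_neg fun hcard => h ((Fintype.existsUnique_iff_card_one _).mpr hcard)

lemma glauberOff_pos_iff (hp : ∀ w, 0 < p w) :
    0 < glauberOff p val a b ↔ ∃! w, val a w ≠ val b w := by
  refine ⟨fun h => by_contra fun hne => h.ne' (glauberOff_eq_zero hne), fun h => ?_⟩
  have hcard := (Fintype.existsUnique_iff_card_one _).mp h
  rw [glauberOff, if_pos hcard]
  exact sum_pos (fun w _ => hp w) (card_pos.mp (hcard ▸ one_pos))

lemma glauberOff_subtype {v : I} [Fintype ↥{u : I | u ≠ v}] {T : Type*}
    {val' : T → ↥{u : I | u ≠ v} → Fin k} {a' b' : T}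
    (ha : ∀ u, val' a' u = val a u) (hb : ∀ u, val' b' u = val b u) (hv : val a v = val b v) :
    glauberOff (fun u : ↥{u : I | u ≠ v} => p u) val' a' b' = glauberOff p val a b := by
  have hsubtype : ({u | val' a' u ≠ val' b' u} : Finset ↥{u : I | u ≠ v}) =
      ({w | val a w ≠ val b w} : Finset I).subtype (· ∈ {u : I | u ≠ v}) := by
    ext; simp [ha, hb]
  have hfilter : ({w ∈ {w | val a w ≠ val b w} | w ∈ {u : I | u ≠ v}} : Finset I) =
      ({w | val a w ≠ val b w} : Finset I) :=
    filter_true_of_mem fun w hw hwv => (mem_filter.mp hw).2 (hwv ▸ hv)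
  simp only [glauberOff, hsubtype, card_subtype, hfilter,
    sum_subtype_eq_sum_filter p]

variable [Fintype S] [DecidableEq S]

lemma glauber_of_ne (p : I → ℝ) (val : S → I → Fin k) (h : a ≠ b) :
    glauber p val a b = glauberOff p val a b :=
  if_neg h

lemma glauber_nonneg_of_ne (hp : ∀ w, 0 ≤ p w) (val : S → I → Fin k) (a b : S) (h : a ≠ b) :
    0 ≤ glauber p val a b :=
  glauber_of_ne p val h ▸ glauberOff_nonneg hp val a b

lemma isReversible_glauber_unif (p : I → ℝ) (val : S → I → Fin k) :
    IsReversible (glauber p val) (unif S) := by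
  intro a b
  obtain rfl | hab := eq_or_ne a b
  · rfl
  · rw [glauber_of_ne p val hab, glauber_of_ne p val hab.symm, glauberOff_comm]
    rfl

lemma isTransition_glauber_iff (hp : ∀ w, 0 < p w) :
    IsTransition (glauber p val) a b ↔ ∃! w, val a w ≠ val b w := by
  refine ⟨fun ⟨hab, hpos⟩ => ?_, fun h => ?_⟩
  · rwa [glauber_of_ne p val hab, glauberOff_pos_iff hp] at hpos
  · have hab : a ≠ b := by
      rintro rfl
      exact h.exists.elim fun _ hw => hw rfl
    exact ⟨hab, by rwa [glauber_of_ne p val hab, glauberOff_pos_iff hp]⟩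

end GlauberRates

/-! ### Deleting a vertex -/

/-- The type of proper `k`-vertex-colourings of `G`, the state space of the Glauber dynamics. -/
abbrev ProperColouring {V : Type*} (G : SimpleGraph V) (k : ℕ) : Type _ :=
  {σ : V → Fin k // ProperCol G σ}

/-- The graph `G - v`, on the vertex set `V ∖ {v}`. -/
abbrev deleteVertex {V : Type*} (G : SimpleGraph V) (v : V) : SimpleGraph ↥{u : V | u ≠ v} :=
  G.induce {u : V | u ≠ v}

namespace ProperColouring

variable {V : Type*} {G : SimpleGraph V} {k : ℕ} {v : V}

/-- The restriction of a proper colouring of `G` to `G - v`. -/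
def restrict (v : V) (σ : ProperColouring G k) : ProperColouring (deleteVertex G v) k :=
  ⟨fun u => σ.1 u, fun a b h => σ.2 a b h⟩

lemma apply_eq_of_restrict_eq {σ η : ProperColouring G k} (h : σ.restrict v = η.restrict v)
    {w : V} (hw : w ≠ v) : σ.1 w = η.1 w :=
  congrFun (congrArg Subtype.val h) ⟨w, hw⟩

lemma eq_of_restrict_eq {σ η : ProperColouring G k} (h : σ.restrict v = η.restrict v)
    (hv : σ.1 v = η.1 v) : σ = η := by
  refine Subtype.ext (funext fun w => ?_)
  obtain rfl | hw := eq_or_ne w v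
  · exact hv
  · exact apply_eq_of_restrict_eq h hw

section Extension

variable [Fintype (G.neighborSet v)]

/-- The colours that a colouring of `G - v` uses on the neighbourhood of `v`, which are the colours
not available at `v`. -/
noncomputable def nbrColours (τ : ProperColouring (deleteVertex G v) k) : Finset (Fin k) :=
  ((G.neighborFinset v).subtype (· ∈ {u : V | u ≠ v})).image τ.1

lemma mem_nbrColours {τ : ProperColouring (deleteVertex G v) k} {c : Fin k} :
    c ∈ τ.nbrColours ↔ ∃ u : ↥{u : V | u ≠ v}, G.Adj v u ∧ τ.1 u = c := by
  simp [nbrColours]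

lemma card_subtype_neighborFinset :
    #((G.neighborFinset v).subtype (· ∈ {u : V | u ≠ v})) = G.degree v := by
  rw [card_subtype, filter_true_of_mem, G.card_neighborFinset_eq_degree]
  exact fun u hu => ((G.mem_neighborFinset v u).mp hu).ne'

lemma card_nbrColours_le (τ : ProperColouring (deleteVertex G v) k) :
    #τ.nbrColours ≤ G.degree v :=
  card_image_le.trans card_subtype_neighborFinset.le

lemma card_nbrColours (hclique : ∀ a b : V, G.Adj v a → G.Adj v b → a ≠ b → G.Adj a b)
    (τ : ProperColouring (deleteVertex G v) k) : #τ.nbrColours = G.degree v := by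
  rw [nbrColours, card_image_of_injOn, card_subtype_neighborFinset]
  intro a ha b hb hab
  rw [mem_coe, mem_subtype, SimpleGraph.mem_neighborFinset] at ha hb
  exact by_contra fun hne => τ.2 a b (hclique a b ha hb (Subtype.coe_ne_coe.mpr hne)) hab

/-- The extension of a proper colouring of `G - v` to `G` by an available colour at `v`. -/
noncomputable def extend (τ : ProperColouring (deleteVertex G v) k) (c : Fin k)
    (hc : c ∉ τ.nbrColours) : ProperColouring G k :=
  ⟨fun w => if h : w = v then c else τ.1 ⟨w, h⟩, by
    have hv (u : ↥{u : V | u ≠ v}) (hu : G.Adj v u) : τ.1 u ≠ c :=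
      fun h => hc (mem_nbrColours.mpr ⟨u, hu, h⟩)
    intro a b hab
    by_cases ha : a = v <;> by_cases hb : b = v
    · exact absurd (ha.trans hb.symm) hab.ne
    · simpa [ha, hb] using (hv ⟨b, hb⟩ (ha ▸ hab)).symm
    · simpa [ha, hb] using hv ⟨a, ha⟩ (hb ▸ hab.symm)
    · simpa [ha, hb] using τ.2 ⟨a, ha⟩ ⟨b, hb⟩ hab⟩

@[simp] lemma extend_apply_self (τ : ProperColouring (deleteVertex G v) k) (c : Fin k)
    (hc : c ∉ τ.nbrColours) : (τ.extend c hc).1 v = c :=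
  dif_pos rfl

@[simp] lemma restrict_extend (τ : ProperColouring (deleteVertex G v) k) (c : Fin k)
    (hc : c ∉ τ.nbrColours) : (τ.extend c hc).restrict v = τ :=
  Subtype.ext <| funext fun u => dif_neg u.2

lemma apply_notMem_nbrColours_restrict (σ : ProperColouring G k) :
    σ.1 v ∉ (σ.restrict v).nbrColours := by
  rw [mem_nbrColours]
  rintro ⟨u, hu, h⟩
  exact σ.2 v u hu h.symm

lemma exists_notMem_nbrColours_of_existsUnique_ne (hdeg : G.degree v + 2 ≤ k)
    {τ τ' : ProperColouring (deleteVertex G v) k} (h : ∃! w, τ.1 w ≠ τ'.1 w) :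
    ∃ c, c ∉ τ.nbrColours ∧ c ∉ τ'.nbrColours := by
  obtain ⟨w, -, hw⟩ := h
  have hcard : #(insert (τ'.1 w) τ.nbrColours) < Fintype.card (Fin k) := by
    have := card_insert_le (τ'.1 w) τ.nbrColours
    have := card_nbrColours_le τ
    rw [Fintype.card_fin]
    omega
  obtain ⟨c, hc⟩ := exists_mem_notMem_of_card_lt_card (s := insert (τ'.1 w) τ.nbrColours)
    (t := univ) hcard
  simp only [mem_insert, not_or] at hc
  refine ⟨c, hc.2.2, fun hmem => ?_⟩
  obtain ⟨u, hu, rfl⟩ := mem_nbrColours.mp hmem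
  by_cases hτu : τ.1 u = τ'.1 u
  · exact hc.2.2 (mem_nbrColours.mpr ⟨u, hu, hτu⟩)
  · exact hc.2.1 (congrArg τ'.1 (hw u hτu))

end Extension

end ProperColouring

/-! ### Glauber dynamics of colourings -/

/-- The Glauber dynamics on the proper `k`-vertex-colourings of `G`, with site rates `p`. -/
noncomputable abbrev glauberDynamics {V : Type*} [Fintype V] [DecidableEq V] (G : SimpleGraph V)
    (k : ℕ) (p : V → ℝ) : ProperColouring G k → ProperColouring G k → ℝ :=
  glauber p fun σ : ProperColouring G k => σ.1

section Deletion

open ProperColouring Relation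

variable {V : Type*} [Fintype V] [DecidableEq V] {G : SimpleGraph V} {k : ℕ} {v : V} {p : V → ℝ}

lemma glauberDynamics_restrict {σ η : ProperColouring G k} (hv : σ.1 v = η.1 v)
    (hne : σ.restrict v ≠ η.restrict v) :
    glauberDynamics (deleteVertex G v) k (fun u => p u) (σ.restrict v) (η.restrict v) =
      glauberDynamics G k p σ η := by
  rw [glauberDynamics, glauber_of_ne _ _ hne, glauberDynamics,
    glauber_of_ne _ _ (ne_of_apply_ne _ hne)]
  exact glauberOff_subtype (fun _ => rfl) (fun _ => rfl) hv

lemma glauberDynamics_eq_zero {σ η : ProperColouring G k} (hv : σ.1 v ≠ η.1 v)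
    (hne : σ.restrict v ≠ η.restrict v) : glauberDynamics G k p σ η = 0 := by
  rw [glauberDynamics, glauber_of_ne _ _ (ne_of_apply_ne _ hne)]
  refine glauberOff_eq_zero fun h => hne (Subtype.ext (funext fun u => ?_))
  exact by_contra fun hu => u.2 (h.unique hu hv)

lemma sum_glauberDynamics_fiber_le (hp : ∀ u, 0 ≤ p u) (σ : ProperColouring G k)
    (τ : ProperColouring (deleteVertex G v) k) (hτ : σ.restrict v ≠ τ) :
    ∑ η with η.restrict v = τ, glauberDynamics G k p σ η ≤
      glauberDynamics (deleteVertex G v) k (fun u => p u) (σ.restrict v) τ := by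
  have hrate_nonneg :
      0 ≤ glauberDynamics (deleteVertex G v) k (fun u => p u) (σ.restrict v) τ :=
    glauber_nonneg_of_ne (fun u : ↥{u : V | u ≠ v} => hp u) _ _ _ hτ
  have hcard : #{η : ProperColouring G k | η.restrict v = τ ∧ σ.1 v = η.1 v} ≤ 1 := by
    refine card_le_one.mpr fun η hη ξ hξ => ?_
    rw [mem_filter_univ] at hη hξ
    exact eq_of_restrict_eq (hη.1.trans hξ.1.symm) (hη.2.symm.trans hξ.2)
  calc ∑ η with η.restrict v = τ, glauberDynamics G k p σ η
      = ∑ η with η.restrict v = τ ∧ σ.1 v = η.1 v, glauberDynamics G k p σ η := by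
        rw [← filter_filter]
        refine (sum_filter_of_ne fun η hη hrate => ?_).symm
        rw [mem_filter_univ] at hη
        exact by_contra fun hv => hrate (glauberDynamics_eq_zero hv (hη.symm ▸ hτ))
    _ = ∑ η : ProperColouring G k with η.restrict v = τ ∧ σ.1 v = η.1 v,
          glauberDynamics (deleteVertex G v) k (fun u => p u) (σ.restrict v) τ := by
        refine sum_congr rfl fun η hη => ?_
        obtain ⟨rfl, hv⟩ := (mem_filter_univ η).mp hη
        exact (glauberDynamics_restrict hv hτ).symm
    _ ≤ glauberDynamics (deleteVertex G v) k (fun u => p u) (σ.restrict v) τ := by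
        rw [sum_const, nsmul_eq_mul]
        exact mul_le_of_le_one_left hrate_nonneg (mod_cast hcard)

lemma reflTransGen_of_restrict_eq (hp : ∀ u, 0 < p u) {σ η : ProperColouring G k}
    (h : σ.restrict v = η.restrict v) :
    ReflTransGen (IsTransition (glauberDynamics G k p)) σ η := by
  by_cases hv : σ.1 v = η.1 v
  · rw [eq_of_restrict_eq h hv]
  · refine .single ((isTransition_glauber_iff hp).mpr ⟨v, hv, fun w hw => ?_⟩)
    exact by_contra fun hwv => hw (apply_eq_of_restrict_eq h hwv)

variable [Fintype (G.neighborSet v)]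

lemma card_fiber_restrict (hclique : ∀ a b : V, G.Adj v a → G.Adj v b → a ≠ b → G.Adj a b)
    (τ : ProperColouring (deleteVertex G v) k) :
    #{σ : ProperColouring G k | σ.restrict v = τ} = k - G.degree v := by
  have hcompl : #(τ.nbrColours)ᶜ = k - G.degree v := by
    rw [card_compl, Fintype.card_fin, card_nbrColours hclique]
  rw [← hcompl]
  refine card_bij (fun σ _ => σ.1 v) (fun σ hσ => ?_) (fun σ hσ η hη hv => ?_) fun c hc => ?_
  · rw [mem_compl, ← (mem_filter.mp hσ).2]
    exact apply_notMem_nbrColours_restrict σ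
  · exact eq_of_restrict_eq ((mem_filter.mp hσ).2.trans (mem_filter.mp hη).2.symm) hv
  · exact ⟨τ.extend c (mem_compl.mp hc), by simp, by simp⟩

lemma isPushforward_restrict
    (hclique : ∀ a b : V, G.Adj v a → G.Adj v b → a ≠ b → G.Adj a b) (hdeg : G.degree v < k) :
    IsPushforward (restrict v) (unif (ProperColouring G k))
      (unif (ProperColouring (deleteVertex G v) k)) :=
  isPushforward_unif (Nat.sub_ne_zero_of_lt hdeg) (card_fiber_restrict hclique)

lemma exists_lift_of_isTransition (hdeg : G.degree v + 2 ≤ k) (hp : ∀ u, 0 < p u)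
    {τ τ' : ProperColouring (deleteVertex G v) k}
    (h : IsTransition (glauberDynamics (deleteVertex G v) k fun u => p u) τ τ') :
    ∃ σ η : ProperColouring G k, σ.restrict v = τ ∧ η.restrict v = τ' ∧
      IsTransition (glauberDynamics G k p) σ η := by
  have hdiff := (isTransition_glauber_iff fun u : ↥{u : V | u ≠ v} => hp u).mp h
  obtain ⟨c, hc, hc'⟩ := exists_notMem_nbrColours_of_existsUnique_ne hdeg hdiff
  have hne : (τ.extend c hc).restrict v ≠ (τ'.extend c hc').restrict v := by simpa using h.1
  refine ⟨τ.extend c hc, τ'.extend c hc', by simp, by simp, ne_of_apply_ne _ hne, ?_⟩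
  rw [← glauberDynamics_restrict (by simp) hne, restrict_extend, restrict_extend]
  exact h.2

lemma isErgodicGen_glauberDynamics_of_deleteVertex (hdeg : G.degree v + 2 ≤ k)
    (hp : ∀ u, 0 < p u)
    (herg : IsErgodicGen (glauberDynamics (deleteVertex G v) k fun u => p u)) :
    IsErgodicGen (glauberDynamics G k p) :=
  isErgodicGen_of_lift (φ := restrict v) (fun _ _ => reflTransGen_of_restrict_eq hp)
    (fun _ _ => exists_lift_of_isTransition hdeg hp) herg

variable [Nontrivial (ProperColouring (deleteVertex G v) k)]

theorem specGap_glauberDynamics_le_deleteVertex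
    (hclique : ∀ a b : V, G.Adj v a → G.Adj v b → a ≠ b → G.Adj a b) (hdeg : G.degree v < k)
    (hp : ∀ u, 0 ≤ p u) :
    specGap (unif (ProperColouring G k)) (glauberDynamics G k p) ≤
      specGap (unif (ProperColouring (deleteVertex G v) k))
        (glauberDynamics (deleteVertex G v) k fun u => p u) :=
  (isPushforward_restrict hclique hdeg).specGap_le (fun σ => (unif_pos σ).le) unif_pos
    (glauber_nonneg_of_ne hp _) (sum_glauberDynamics_fiber_le hp)

theorem relaxTime_glauberDynamics_deleteVertex_le
    (hclique : ∀ a b : V, G.Adj v a → G.Adj v b → a ≠ b → G.Adj a b)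
    (hdeg : G.degree v + 2 ≤ k) (hp : ∀ u, 0 < p u) :
    relaxTime (unif (ProperColouring (deleteVertex G v) k))
        (glauberDynamics (deleteVertex G v) k fun u => p u) ≤
      relaxTime (unif (ProperColouring G k)) (glauberDynamics G k p) := by
  have hnonneg := glauber_nonneg_of_ne (fun u => (hp u).le) fun σ : ProperColouring G k => σ.1
  have hnonneg' := glauber_nonneg_of_ne (fun u : ↥{u : V | u ≠ v} => (hp u).le)
    fun τ : ProperColouring (deleteVertex G v) k => τ.1
  have hsurj := (isPushforward_restrict (k := k) hclique (by omega)).surjective unif_pos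
  have : Nontrivial (ProperColouring G k) := hsurj.nontrivial
  refine relaxTime_le_of_specGap_le (specGap_nonneg (fun σ => (unif_pos σ).le) hnonneg)
    (specGap_glauberDynamics_le_deleteVertex hclique (by omega) fun u => (hp u).le) fun hgap => ?_
  refine specGap_pos_of_isErgodicGen unif_pos hnonneg
    (isErgodicGen_glauberDynamics_of_deleteVertex hdeg hp ?_)
  exact isErgodicGen_of_specGap_pos (fun τ => (unif_pos τ).le) hnonneg'
    (isReversible_glauber_unif _ _) hgap

end Deletion

/-- monotonicity of Glauber dynamics: if the neighbourhood of `v` induces a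
clique of size at most `k - 2`, then removing `v` does not increase the relaxation time:
`Gap(𝓛_V) ≤ Gap(𝓛_{V∖{v}})`, equivalently `τ(𝓛_{V∖{v}}) ≤ τ(𝓛_V)`. -/
theorem glauber_monotone
    {V : Type} [Fintype V] [DecidableEq V] (G : SimpleGraph V) [DecidableRel G.Adj]
    (k : ℕ) (v : V)
    (hclique : ∀ a b : V, G.Adj v a → G.Adj v b → a ≠ b → G.Adj a b)
    (hdeg : G.degree v + 2 ≤ k)
    (p : V → ℝ) (hp : ∀ u, 0 < p u)
    (h2 : 2 ≤ Fintype.card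
      {σ : ↥{u : V | u ≠ v} → Fin k // ProperCol (G.induce {u : V | u ≠ v}) σ}) :
    specGap (unif {σ : V → Fin k // ProperCol G σ})
        (glauber p (fun σ : {σ : V → Fin k // ProperCol G σ} => σ.1)) ≤
      specGap (unif {σ : ↥{u : V | u ≠ v} → Fin k // ProperCol (G.induce {u : V | u ≠ v}) σ})
        (glauber (fun u : ↥{u : V | u ≠ v} => p u.1)
          (fun σ : {σ : ↥{u : V | u ≠ v} → Fin k //
            ProperCol (G.induce {u : V | u ≠ v}) σ} => σ.1)) ∧
    relaxTime (unif {σ : ↥{u : V | u ≠ v} → Fin k // ProperCol (G.induce {u : V | u ≠ v}) σ})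
        (glauber (fun u : ↥{u : V | u ≠ v} => p u.1)
          (fun σ : {σ : ↥{u : V | u ≠ v} → Fin k //
            ProperCol (G.induce {u : V | u ≠ v}) σ} => σ.1)) ≤
      relaxTime (unif {σ : V → Fin k // ProperCol G σ})
        (glauber p (fun σ : {σ : V → Fin k // ProperCol G σ} => σ.1)) := by
  have : Nontrivial (ProperColouring (deleteVertex G v) k) :=
    Fintype.one_lt_card_iff_nontrivial.mp h2
  exact ⟨specGap_glauberDynamics_le_deleteVertex hclique (by omega) fun u => (hp u).le,
    relaxTime_glauberDynamics_deleteVertex_le hclique hdeg hp⟩
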